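/- Let λ1 be the first eigenvalue of the fractional Laplacian with zero mixed boundary conditions, let χ1 ∈ E^s_{Σ1} be the associated normalized positive first eigenfunction, and let ξ0 be the weak solution of the mixed problem with right-hand side f ≡ 1. Then there exists a constant C = C(Ω, N, s, Σ1, Σ2) > 0 such that C^{-1} ξ0(x) ≤ χ1(x) ≤ C ξ0(x) for a.e. x ∈ Ω. -/

import Mathlib

open MeasureTheory Set

noncomputable section

/-- Euclidean space ℝ^N. -/
abbrev Rn (N : ℕ) := EuclideanSpace ℝ (Fin N)

/-- The set Q := ℝ^{2N} \ ((ℝ^N \ Ω) × (ℝ^N \ Ω)). -/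
def Qset (N : ℕ) (Ω : Set (Rn N)) : Set (Rn N × Rn N) :=
  Set.univ \ (Ωᶜ ×ˢ Ωᶜ)

/-- The kernel (u(x)-u(y))(v(x)-v(y))/|x-y|^{N+2s}. -/
def frKer (N : ℕ) (s : ℝ) (u v : Rn N → ℝ) (p : Rn N × Rn N) : ℝ :=
  (u p.1 - u p.2) * (v p.1 - v p.2) / ‖p.1 - p.2‖ ^ ((N : ℝ) + 2 * s)

/-- Membership in the space E^s_{Σ₁}: measurable, vanishing a.e. on Σ₁,
with finite L²(Ω) norm and finite Gagliardo seminorm over Q. -/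
def MemE (N : ℕ) (s : ℝ) (Ω S1 : Set (Rn N)) (u : Rn N → ℝ) : Prop :=
  Measurable u ∧ (∀ᵐ x : Rn N, x ∈ S1 → u x = 0) ∧
  IntegrableOn (fun x => (u x) ^ 2) Ω ∧
  IntegrableOn (frKer N s u u) (Qset N Ω)

/-- Weak solution of the mixed problem (-Δ)^s u = f in Ω, u = 0 in Σ₁, 𝒩_s u = 0 in Σ₂. -/
def IsWeakSolMixed (N : ℕ) (s aNs : ℝ) (Ω S1 : Set (Rn N)) (f u : Rn N → ℝ) : Prop :=
  MemE N s Ω S1 u ∧ ∀ φ : Rn N → ℝ, MemE N s Ω S1 φ →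
    (aNs / 2) * ∫ p in Qset N Ω, frKer N s u φ p = ∫ x in Ω, f x * φ x

/-! Both inequalities come from the weak maximum principle for subsolutions, obtained by testing
with the truncation of the subsolution to `[0, 1]`.

The eigenfunction `u` is bounded: test its equation with `(u - 2 K)⁺`. For a small radius `r` and a
large level `K`, at least half of every ball `B(x, r)` with `x ∈ Ω` lies in `{u ≤ K}`, and the pairs
`(x, y)` with `y` in that half already contribute about `r ^ (-2 s) ∫ u (u - 2 K)⁺` to the form,
more than the right-hand side. Hence `u` is a subsolution with a constant right-hand side, so
`u ≤ C ξ`.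

Conversely, fix a level `t` exceeded by `u` on a non-null set and a convex `C^{1,1}` function `H`
vanishing exactly on `(-∞, 0]`. For a convex function of `u`, the nonlocal chain rule has an excess
which at points of `{u ≤ t}` is at least `c = const · ∫_Ω H(u - t) > 0`, because `Ω` is bounded.
Thus `H(u - t)` satisfies `(-Δ)^s H(u - t) ≤ -c` on `{u ≤ t}`, where the eigenfunction equation
alone gives no positive lower bound on the right-hand side `λ u`. On `{t < u}` it does, so
`c ξ + H(u - t) - M u` is a subsolution with nonpositive right-hand side for large `M`, and
`c ξ ≤ M u`. -/

section RealFunctions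

lemma sub_mul_sub_nonneg_of_monotone {T : ℝ → ℝ} (hT : Monotone T) (a b : ℝ) :
    0 ≤ (a - b) * (T a - T b) := by
  rcases le_total a b with hab | hab
  · exact mul_nonneg_of_nonpos_of_nonpos (sub_nonpos.2 hab) (sub_nonpos.2 (hT hab))
  · exact mul_nonneg (sub_nonneg.2 hab) (sub_nonneg.2 (hT hab))

lemma sub_mul_sub_le_of_monotone_of_lipschitzWith_one {T : ℝ → ℝ} (hT : Monotone T)
    (hT' : LipschitzWith 1 T) (a b : ℝ) :
    (T a - T b) * (T a - T b) ≤ (a - b) * (T a - T b) := by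
  have habs : |T a - T b| ≤ |a - b| := by
    simpa only [Real.dist_eq, NNReal.coe_one, one_mul] using hT'.dist_le_mul a b
  calc (T a - T b) * (T a - T b) = |T a - T b| * |T a - T b| := (abs_mul_abs_self _).symm
    _ ≤ |a - b| * |T a - T b| := by gcongr
    _ = (a - b) * (T a - T b) := by
      rw [← abs_mul, abs_of_nonneg (sub_mul_sub_nonneg_of_monotone hT a b)]

/-- Truncation of a real number to the unit interval, used to produce admissible test functions. -/
def unitTrunc (r : ℝ) : ℝ := max 0 (min 1 r)

lemma unitTrunc_nonneg (r : ℝ) : 0 ≤ unitTrunc r := le_max_left _ _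

lemma unitTrunc_le_one (r : ℝ) : unitTrunc r ≤ 1 := max_le zero_le_one (min_le_left _ _)

lemma unitTrunc_mem_Icc (r : ℝ) : unitTrunc r ∈ Icc (0 : ℝ) 1 :=
  ⟨unitTrunc_nonneg r, unitTrunc_le_one r⟩

lemma unitTrunc_of_nonpos {r : ℝ} (hr : r ≤ 0) : unitTrunc r = 0 :=
  max_eq_left ((min_le_right _ _).trans hr)

lemma unitTrunc_pos {r : ℝ} (hr : 0 < r) : 0 < unitTrunc r :=
  (lt_min one_pos hr).trans_le (le_max_right _ _)

lemma unitTrunc_of_mem_Icc {r : ℝ} (hr : r ∈ Icc (0 : ℝ) 1) : unitTrunc r = r := by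
  rw [unitTrunc, min_eq_right hr.2, max_eq_right hr.1]

lemma unitTrunc_of_one_le {r : ℝ} (hr : 1 ≤ r) : unitTrunc r = 1 := by
  rw [unitTrunc, min_eq_left hr, max_eq_right zero_le_one]

lemma monotone_unitTrunc : Monotone unitTrunc :=
  monotone_const.max (monotone_const.min monotone_id)

lemma lipschitzWith_unitTrunc : LipschitzWith 1 unitTrunc :=
  (LipschitzWith.id.const_min 1).const_max 0

/-- The one-sided Huber function, the convex primitive of `unitTrunc` vanishing on `(-∞, 0]`:
it equals `r² / 2` on `[0, 1]` and `r - 1 / 2` on `[1, ∞)`. -/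
def huber (r : ℝ) : ℝ := unitTrunc r * r - unitTrunc r ^ 2 / 2

lemma huber_of_nonpos {r : ℝ} (hr : r ≤ 0) : huber r = 0 := by
  simp [huber, unitTrunc_of_nonpos hr]

-- `huber` is the Legendre transform of `m ↦ m² / 2` on `[0, 1]`.
lemma mul_sub_sq_div_two_le_huber {m : ℝ} (hm : m ∈ Icc (0 : ℝ) 1) (r : ℝ) :
    m * r - m ^ 2 / 2 ≤ huber r := by
  obtain ⟨hm0, hm1⟩ := hm
  rcases le_total r 0 with hr | hr0
  · rw [huber_of_nonpos hr]
    nlinarith [mul_nonneg hm0 (neg_nonneg.2 hr)]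
  rcases le_total r 1 with hr1 | hr
  · rw [huber, unitTrunc_of_mem_Icc ⟨hr0, hr1⟩]
    nlinarith [sq_nonneg (r - m)]
  · rw [huber, unitTrunc_of_one_le hr]
    nlinarith [mul_nonneg (sub_nonneg.2 hm1) (sub_nonneg.2 hr), sq_nonneg (1 - m)]

lemma huber_add_unitTrunc_mul_sub_le (a b : ℝ) :
    huber b + unitTrunc b * (a - b) ≤ huber a :=
  calc huber b + unitTrunc b * (a - b) = unitTrunc b * a - unitTrunc b ^ 2 / 2 := by
        rw [huber]; ring
    _ ≤ huber a := mul_sub_sq_div_two_le_huber (unitTrunc_mem_Icc b) a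

lemma huber_nonneg (r : ℝ) : 0 ≤ huber r := by
  simpa using mul_sub_sq_div_two_le_huber (left_mem_Icc.2 zero_le_one) r

lemma huber_pos {r : ℝ} (hr : 0 < r) : 0 < huber r := by
  have hle : unitTrunc r ≤ r := max_le hr.le (min_le_right _ _)
  have hpos := unitTrunc_pos hr
  rw [huber]
  nlinarith

lemma lipschitzWith_huber : LipschitzWith 1 huber := by
  refine LipschitzWith.of_le_add fun a b ↦ ?_
  have hslope : unitTrunc a * (a - b) ≤ dist a b :=
    calc unitTrunc a * (a - b) ≤ unitTrunc a * |a - b| :=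
          mul_le_mul_of_nonneg_left (le_abs_self _) (unitTrunc_nonneg a)
      _ ≤ dist a b := mul_le_of_le_one_left (abs_nonneg _) (unitTrunc_le_one a)
  linarith [huber_add_unitTrunc_mul_sub_le b a]

/-- The Bregman divergence of a function `G` with slope function `h`: the gap at `a` between `G`
and the line of slope `h b` through `(b, G b)`. -/
def bregman (G h : ℝ → ℝ) (a b : ℝ) : ℝ := G a - G b - h b * (a - b)

lemma bregman_huber_nonneg (a b : ℝ) : 0 ≤ bregman huber unitTrunc a b := by
  rw [bregman]
  linarith [huber_add_unitTrunc_mul_sub_le a b]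

lemma bregman_huber_of_nonpos {b : ℝ} (hb : b ≤ 0) (a : ℝ) :
    bregman huber unitTrunc a b = huber a := by
  simp [bregman, huber_of_nonpos hb, unitTrunc_of_nonpos hb]

end RealFunctions

section Measure

lemma exists_pos_not_ae_le {α : Type*} [MeasurableSpace α] {μ : Measure α} {u : α → ℝ}
    (hu : ¬ ∀ᵐ x ∂μ, u x ≤ 0) : ∃ t : ℝ, 0 < t ∧ ¬ ∀ᵐ x ∂μ, u x ≤ t := by
  contrapose! hu
  have hall : ∀ᵐ x ∂μ, ∀ n : ℕ, u x ≤ 1 / ((n : ℝ) + 1) :=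
    ae_all_iff.2 fun n ↦ hu _ Nat.one_div_pos_of_nat
  filter_upwards [hall] with x hx
  exact ge_of_tendsto' tendsto_one_div_add_atTop_nhds_zero_nat hx

lemma exists_pos_measure_inter_lt {α : Type*} [MeasurableSpace α] {μ : Measure α} {A : Set α}
    (hA : MeasurableSet A) (hAμ : μ A ≠ ⊤) {u : α → ℝ} (hu : Measurable u)
    {ε : ENNReal} (hε : 0 < ε) : ∃ K : ℝ, 0 < K ∧ μ (A ∩ {x | K < u x}) < ε := by
  have hempty : ⋂ n : ℕ, A ∩ {x | (n : ℝ) < u x} = ∅ := by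
    refine eq_empty_of_forall_notMem fun x hx ↦ ?_
    obtain ⟨n, hn⟩ := exists_nat_ge (u x)
    exact hn.not_gt (mem_iInter.1 hx n).2
  have hlim := tendsto_measure_iInter_atTop (μ := μ) (s := fun n : ℕ ↦ A ∩ {x | (n : ℝ) < u x})
    (fun n ↦ (hA.inter (measurableSet_lt measurable_const hu)).nullMeasurableSet)
    (fun m n hmn x hx ↦ ⟨hx.1, mem_ofPred.2 ((Nat.cast_le.2 hmn).trans_lt (mem_ofPred.1 hx.2))⟩)
    ⟨0, measure_ne_top_of_subset inter_subset_left hAμ⟩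
  rw [hempty, measure_empty] at hlim
  obtain ⟨n, hn, hn0⟩ :=
    ((hlim.eventually (gt_mem_nhds hε)).and (Filter.eventually_gt_atTop 0)).exists
  exact ⟨n, Nat.cast_pos.2 hn0, hn⟩

variable {E : Type*} [NormedAddCommGroup E] [NormedSpace ℝ E] [FiniteDimensional ℝ E]
  [MeasurableSpace E] [BorelSpace E] (μ : Measure E) [μ.IsAddHaarMeasure]

lemma exists_pos_forall_half_ball_le {Ω : Set E} (hΩ : Bornology.IsBounded Ω)
    {u : E → ℝ} (hu : Measurable u) {r : ℝ} (hr : 0 < r) :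
    ∃ K : ℝ, 0 < K ∧ ∀ x ∈ Ω, μ.real (Metric.ball 0 r) / 2 ≤
      μ.real (Metric.ball x r ∩ {y | u y ≤ K}) := by
  have : ProperSpace E := FiniteDimensional.proper ℝ E
  have hball : 0 < μ.real (Metric.ball 0 r) :=
    ENNReal.toReal_pos (Metric.measure_ball_pos _ _ hr).ne' measure_ball_lt_top.ne
  have hthick : μ (Metric.thickening r Ω) ≠ ⊤ := hΩ.thickening.measure_lt_top.ne
  obtain ⟨K, hK, hsmall⟩ := exists_pos_measure_inter_lt Metric.isOpen_thickening.measurableSet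
    hthick hu (ENNReal.ofReal_pos.2 (half_pos hball))
  refine ⟨K, hK, fun x hx ↦ ?_⟩
  have hlarge : μ.real (Metric.ball x r \ {y | u y ≤ K}) ≤ μ.real (Metric.ball 0 r) / 2 := by
    refine ENNReal.toReal_le_of_le_ofReal (half_pos hball).le ((measure_mono ?_).trans hsmall.le)
    exact fun y hy ↦ ⟨Metric.ball_subset_thickening hx r hy.1, mem_ofPred.2 (not_le.1 hy.2)⟩
  have hsplit := measureReal_inter_add_sdiff (μ := μ) (s := Metric.ball x r)
    (measurableSet_le hu (measurable_const (a := K))) measure_ball_lt_top.ne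
  rw [Measure.addHaar_real_ball_center] at hsplit
  linarith

lemma exists_pos_mul_rpow_lt_measure_ball {σ : ℝ} (hσ : 0 < σ) (c : ℝ) :
    ∃ r : ℝ, 0 < r ∧ c * r ^ (Module.finrank ℝ E + σ) < μ.real (Metric.ball 0 r) := by
  have : ProperSpace E := FiniteDimensional.proper ℝ E
  have hball : 0 < μ.real (Metric.ball 0 1) :=
    ENNReal.toReal_pos (Metric.measure_ball_pos _ _ one_pos).ne' measure_ball_lt_top.ne
  have hlim : Filter.Tendsto (fun r : ℝ ↦ c * r ^ σ) (nhdsWithin 0 (Ioi 0)) (nhds 0) := by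
    have hcont : ContinuousAt (fun r : ℝ ↦ c * r ^ σ) 0 :=
      (Real.continuousAt_rpow_const 0 σ (Or.inr hσ.le)).const_mul c
    simpa only [Real.zero_rpow hσ.ne', mul_zero] using
      hcont.tendsto.mono_left nhdsWithin_le_nhds
  obtain ⟨r, hlt, hr⟩ :=
    ((hlim.eventually (gt_mem_nhds hball)).and self_mem_nhdsWithin).exists
  refine ⟨r, hr, ?_⟩
  calc c * r ^ (Module.finrank ℝ E + σ) = r ^ Module.finrank ℝ E * (c * r ^ σ) := by
        rw [Real.rpow_add hr, Real.rpow_natCast]; ring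
    _ < r ^ Module.finrank ℝ E * μ.real (Metric.ball 0 1) :=
        mul_lt_mul_of_pos_left hlt (pow_pos hr _)
    _ = μ.real (Metric.ball 0 r) := by
        rw [measureReal_def, measureReal_def, Measure.addHaar_ball_of_pos _ _ hr,
          ENNReal.toReal_mul, ENNReal.toReal_ofReal (pow_pos hr _).le]

end Measure

section FunctionSpace

variable {N : ℕ} {s : ℝ} {Ω S1 : Set (Rn N)} {u v φ : Rn N → ℝ}

lemma mem_Qset_iff {p : Rn N × Rn N} : p ∈ Qset N Ω ↔ p.1 ∈ Ω ∨ p.2 ∈ Ω := by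
  simp only [Qset, mem_sdiff, mem_univ, mem_prod, mem_compl_iff, true_and]
  tauto

lemma prod_subset_Qset (T : Set (Rn N)) : Ω ×ˢ T ⊆ Qset N Ω := fun _ hp ↦
  mem_Qset_iff.2 (Or.inl hp.1)

lemma measurableSet_Qset (hΩ : MeasurableSet Ω) : MeasurableSet (Qset N Ω) :=
  MeasurableSet.univ.diff (hΩ.compl.prod hΩ.compl)

lemma measurable_frKer (hu : Measurable u) (hv : Measurable v) : Measurable (frKer N s u v) := by
  unfold frKer
  fun_prop

lemma frKer_le_frKer {w z : Rn N → ℝ} {p : Rn N × Rn N}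
    (h : (u p.1 - u p.2) * (v p.1 - v p.2) ≤ (w p.1 - w p.2) * (z p.1 - z p.2)) :
    frKer N s u v p ≤ frKer N s w z p :=
  div_le_div_of_nonneg_right h (Real.rpow_nonneg (norm_nonneg _) _)

lemma frKer_comp_nonneg {T : ℝ → ℝ} (hT : Monotone T) (u : Rn N → ℝ) (p : Rn N × Rn N) :
    0 ≤ frKer N s u (fun x ↦ T (u x)) p :=
  div_nonneg (sub_mul_sub_nonneg_of_monotone hT _ _) (Real.rpow_nonneg (norm_nonneg _) _)

lemma frKer_self_nonneg (u : Rn N → ℝ) (p : Rn N × Rn N) : 0 ≤ frKer N s u u p :=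
  frKer_comp_nonneg monotone_id u p

lemma abs_frKer_le (u v : Rn N → ℝ) (p : Rn N × Rn N) :
    |frKer N s u v p| ≤ frKer N s u u p + frKer N s v v p := by
  have hk : 0 ≤ ‖p.1 - p.2‖ ^ ((N : ℝ) + 2 * s) := Real.rpow_nonneg (norm_nonneg _) _
  rw [frKer, frKer, frKer, abs_div, abs_of_nonneg hk, ← add_div]
  refine div_le_div_of_nonneg_right (abs_le.2 ⟨?_, ?_⟩) hk <;>
  nlinarith [sq_nonneg (u p.1 - u p.2 + (v p.1 - v p.2)),
    sq_nonneg (u p.1 - u p.2 - (v p.1 - v p.2)), sq_nonneg (u p.1 - u p.2),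
    sq_nonneg (v p.1 - v p.2)]

lemma MemE.integrableOn_frKer (hu : MemE N s Ω S1 u) (hv : MemE N s Ω S1 v) :
    IntegrableOn (frKer N s u v) (Qset N Ω) :=
  (hu.2.2.2.add hv.2.2.2).mono' (measurable_frKer hu.1 hv.1).aestronglyMeasurable
    (ae_of_all _ (abs_frKer_le u v))

lemma MemE.memLp_two (hu : MemE N s Ω S1 u) : MemLp u 2 (volume.restrict Ω) :=
  (memLp_two_iff_integrable_sq hu.1.aestronglyMeasurable).2 hu.2.2.1

lemma MemE.integrableOn_mul (hu : MemE N s Ω S1 u) (hv : MemE N s Ω S1 v) :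
    IntegrableOn (fun x ↦ u x * v x) Ω :=
  hu.memLp_two.integrable_mul hv.memLp_two

lemma MemE.integrableOn (hu : MemE N s Ω S1 u) (hΩ : volume Ω ≠ ⊤) : IntegrableOn u Ω :=
  have : IsFiniteMeasure (volume.restrict Ω) := isFiniteMeasure_restrict.2 hΩ
  hu.memLp_two.integrable one_le_two

lemma MemE.of_abs_le {C : ℝ} (hu : MemE N s Ω S1 u) (hv : MemE N s Ω S1 v) (hφ : Measurable φ)
    (hval : ∀ x, |φ x| ≤ C * (|u x| + |v x|))
    (hdiff : ∀ x y, |φ x - φ y| ≤ C * (|u x - u y| + |v x - v y|)) :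
    MemE N s Ω S1 φ := by
  have hsq {a b c : ℝ} (h : |a| ≤ C * (|b| + |c|)) : a ^ 2 ≤ 2 * C ^ 2 * (b ^ 2 + c ^ 2) :=
    calc a ^ 2 = |a| ^ 2 := (sq_abs a).symm
      _ ≤ (C * (|b| + |c|)) ^ 2 := pow_le_pow_left₀ (abs_nonneg a) h 2
      _ = C ^ 2 * (|b| + |c|) ^ 2 := mul_pow _ _ 2
      _ ≤ C ^ 2 * (2 * (|b| ^ 2 + |c| ^ 2)) := by gcongr; exact add_sq_le
      _ = 2 * C ^ 2 * (b ^ 2 + c ^ 2) := by rw [sq_abs, sq_abs]; ring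
  refine ⟨hφ, ?_, ?_, ?_⟩
  · filter_upwards [hu.2.1, hv.2.1] with x hux hvx hx
    simpa [hux hx, hvx hx] using hval x
  · refine ((hu.2.2.1.add hv.2.2.1).const_mul (2 * C ^ 2)).mono'
      (hφ.pow_const 2).aestronglyMeasurable (ae_of_all _ fun x ↦ ?_)
    rw [Real.norm_of_nonneg (sq_nonneg _)]
    exact hsq (hval x)
  · refine ((hu.2.2.2.add hv.2.2.2).const_mul (2 * C ^ 2)).mono'
      (measurable_frKer hφ hφ).aestronglyMeasurable (ae_of_all _ fun p ↦ ?_)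
    rw [Real.norm_of_nonneg (frKer_self_nonneg φ p)]
    simp only [Pi.add_apply, frKer, ← sq, ← add_div, ← mul_div_assoc]
    exact div_le_div_of_nonneg_right (hsq (hdiff p.1 p.2)) (Real.rpow_nonneg (norm_nonneg _) _)

lemma MemE.add (hu : MemE N s Ω S1 u) (hv : MemE N s Ω S1 v) :
    MemE N s Ω S1 (fun x ↦ u x + v x) := by
  refine .of_abs_le (C := 1) hu hv (hu.1.add hv.1) (fun x ↦ ?_) (fun x y ↦ ?_)
  · simpa only [one_mul] using abs_add_le (u x) (v x)
  · simpa only [one_mul, add_sub_add_comm] using abs_add_le (u x - u y) (v x - v y)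

lemma MemE.comp_lipschitzWith {T : ℝ → ℝ} {K : NNReal} (hT : LipschitzWith K T) (hT0 : T 0 = 0)
    (hu : MemE N s Ω S1 u) : MemE N s Ω S1 (fun x ↦ T (u x)) := by
  have hdiff (a b : ℝ) : |T a - T b| ≤ K * (|a - b| + |a - b|) := by
    have hdist : |T a - T b| ≤ K * |a - b| := hT.dist_le_mul a b
    nlinarith [mul_nonneg K.coe_nonneg (abs_nonneg (a - b))]
  refine .of_abs_le hu hu (hT.continuous.measurable.comp hu.1) (fun x ↦ ?_)
    fun x y ↦ hdiff (u x) (u y)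
  simpa only [hT0, sub_zero] using hdiff (u x) 0

lemma MemE.const_mul (c : ℝ) (hu : MemE N s Ω S1 u) : MemE N s Ω S1 (fun x ↦ c * u x) :=
  hu.comp_lipschitzWith (lipschitzWith_smul c) (mul_zero c)

lemma MemE.comp_sub {T : ℝ → ℝ} {K : NNReal} (hT : LipschitzWith K T) {t : ℝ}
    (ht : T (-t) = 0) (hu : MemE N s Ω S1 u) : MemE N s Ω S1 (fun x ↦ T (u x - t)) :=
  hu.comp_lipschitzWith (T := fun r ↦ T (r - t))
    (by simpa [Function.comp_def] using hT.comp (LipschitzWith.id.sub (LipschitzWith.const t)))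
    (by simpa using ht)

lemma MemE.mul_of_abs_le_one (hu : MemE N s Ω S1 u) (hv : MemE N s Ω S1 v)
    (hu1 : ∀ x, |u x| ≤ 1) (hv1 : ∀ x, |v x| ≤ 1) : MemE N s Ω S1 (fun x ↦ u x * v x) := by
  refine .of_abs_le (C := 1) hu hv (hu.1.mul hv.1) (fun x ↦ ?_) (fun x y ↦ ?_)
  · rw [abs_mul, one_mul]
    nlinarith [mul_le_of_le_one_right (abs_nonneg (u x)) (hv1 x), abs_nonneg (v x)]
  · calc |u x * v x - u y * v y| = |(u x - u y) * v x + u y * (v x - v y)| := by ring_nf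
      _ ≤ |u x - u y| * |v x| + |u y| * |v x - v y| := by
        rw [← abs_mul, ← abs_mul]; exact abs_add_le _ _
      _ ≤ |u x - u y| * 1 + 1 * |v x - v y| := by gcongr <;> simp only [hu1, hv1]
      _ = 1 * (|u x - u y| + |v x - v y|) := by ring

end FunctionSpace

section GagliardoForm

variable {N : ℕ} {s : ℝ} {Ω S1 : Set (Rn N)} {u v φ : Rn N → ℝ}

/-- The Gagliardo form `∬_Q (u(x) - u(y)) (v(x) - v(y)) / |x - y|^{N + 2s} dx dy`, which represents
the fractional Laplacian up to the factor `a_{N,s} / 2`. -/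
def gagliardoForm (N : ℕ) (s : ℝ) (Ω : Set (Rn N)) (u v : Rn N → ℝ) : ℝ :=
  ∫ p in Qset N Ω, frKer N s u v p

lemma gagliardoForm_add_left (hu : MemE N s Ω S1 u) (hv : MemE N s Ω S1 v)
    (hφ : MemE N s Ω S1 φ) :
    gagliardoForm N s Ω (fun x ↦ u x + v x) φ =
      gagliardoForm N s Ω u φ + gagliardoForm N s Ω v φ := by
  rw [gagliardoForm, gagliardoForm, gagliardoForm,
    ← integral_add (hu.integrableOn_frKer hφ) (hv.integrableOn_frKer hφ)]
  refine integral_congr_ae (ae_of_all _ fun p ↦ ?_)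
  simp only [frKer]
  ring

lemma gagliardoForm_const_mul_left (c : ℝ) (u φ : Rn N → ℝ) :
    gagliardoForm N s Ω (fun x ↦ c * u x) φ = c * gagliardoForm N s Ω u φ := by
  rw [gagliardoForm, gagliardoForm, ← integral_const_mul]
  refine integral_congr_ae (ae_of_all _ fun p ↦ ?_)
  simp only [frKer]
  ring

lemma gagliardoForm_unitTrunc_le (hu : MemE N s Ω S1 u) :
    gagliardoForm N s Ω (fun x ↦ unitTrunc (u x)) (fun x ↦ unitTrunc (u x)) ≤
      gagliardoForm N s Ω u (fun x ↦ unitTrunc (u x)) := by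
  have hT := hu.comp_lipschitzWith lipschitzWith_unitTrunc (unitTrunc_of_nonpos le_rfl)
  exact integral_mono (hT.integrableOn_frKer hT) (hu.integrableOn_frKer hT) fun p ↦
    frKer_le_frKer (sub_mul_sub_le_of_monotone_of_lipschitzWith_one monotone_unitTrunc
      lipschitzWith_unitTrunc _ _)

-- The pairs in `Ω × S1` contribute `u(x)² / |x - y|^{N + 2s}` to the form, so `u(x) ≠ 0` on a
-- non-null subset of `Ω` would make it positive.
lemma MemE.ae_eq_zero_of_gagliardoForm_self_nonpos (hΩ : MeasurableSet Ω) (hdisj : Disjoint Ω S1)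
    (hS1 : volume S1 ≠ 0) (hu : MemE N s Ω S1 u) (hform : gagliardoForm N s Ω u u ≤ 0) :
    ∀ᵐ x ∂volume.restrict Ω, u x = 0 := by
  have hzero : ∀ᵐ p, p ∈ Qset N Ω → frKer N s u u p = 0 := by
    refine (ae_restrict_iff' (measurableSet_Qset hΩ)).1 ?_
    refine (integral_eq_zero_iff_of_nonneg (frKer_self_nonneg u) (hu.integrableOn_frKer hu)).1 ?_
    exact le_antisymm hform (integral_nonneg (frKer_self_nonneg u))
  rw [ae_restrict_iff' hΩ]
  filter_upwards [Measure.ae_ae_of_ae_prod hzero] with x hx hxΩ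
  by_contra hux
  refine hS1 (measure_eq_zero_iff_ae_notMem.2 ?_)
  filter_upwards [hx, hu.2.1] with y hxy huy hy
  have hne : x ≠ y := hdisj.ne_of_mem hxΩ hy
  have hpos : 0 < frKer N s u u (x, y) := by
    rw [frKer, huy hy, sub_zero]
    exact div_pos (mul_self_pos.2 hux)
      (Real.rpow_pos_of_pos (norm_pos_iff.2 (sub_ne_zero.2 hne)) _)
  exact hpos.ne' (hxy (mem_Qset_iff.2 (Or.inl hxΩ)))

end GagliardoForm

section Subsolutions

variable {N : ℕ} {s a : ℝ} {Ω S1 : Set (Rn N)} {f g u v φ : Rn N → ℝ}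

/-- Weak subsolutions of the mixed problem, `(-Δ)^s u ≤ f` in `Ω`. Only test functions with values
in `[0, 1]` are used: they can be multiplied by bounded elements of `E^s_{Σ₁}`, and their integral
against any `f ∈ L¹(Ω)` is finite. -/
def IsWeakSubsolMixed (N : ℕ) (s a : ℝ) (Ω S1 : Set (Rn N)) (f u : Rn N → ℝ) : Prop :=
  MemE N s Ω S1 u ∧ ∀ φ : Rn N → ℝ, MemE N s Ω S1 φ → (∀ x, φ x ∈ Icc (0 : ℝ) 1) →
    a / 2 * gagliardoForm N s Ω u φ ≤ ∫ x in Ω, f x * φ x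

lemma MemE.integrableOn_mul_of_mem_Icc (hφ : MemE N s Ω S1 φ) (hφ01 : ∀ x, φ x ∈ Icc (0 : ℝ) 1)
    (hf : IntegrableOn f Ω) : IntegrableOn (fun x ↦ f x * φ x) Ω :=
  hf.mul_bdd (c := 1) hφ.1.aestronglyMeasurable <| ae_of_all _ fun x ↦ by
    simpa only [Real.norm_of_nonneg (hφ01 x).1] using (hφ01 x).2

lemma IsWeakSolMixed.gagliardoForm_eq (hu : IsWeakSolMixed N s a Ω S1 f u)
    (hφ : MemE N s Ω S1 φ) : a / 2 * gagliardoForm N s Ω u φ = ∫ x in Ω, f x * φ x :=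
  hu.2 φ hφ

lemma IsWeakSolMixed.isWeakSubsolMixed_const_mul (c : ℝ) (hu : IsWeakSolMixed N s a Ω S1 f u) :
    IsWeakSubsolMixed N s a Ω S1 (fun x ↦ c * f x) (fun x ↦ c * u x) := by
  refine ⟨hu.1.const_mul c, fun φ hφ _ ↦ le_of_eq ?_⟩
  simp_rw [mul_assoc c, integral_const_mul]
  rw [gagliardoForm_const_mul_left, ← hu.gagliardoForm_eq hφ]
  ring

lemma IsWeakSubsolMixed.add (hf : IntegrableOn f Ω) (hg : IntegrableOn g Ω)
    (hu : IsWeakSubsolMixed N s a Ω S1 f u) (hv : IsWeakSubsolMixed N s a Ω S1 g v) :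
    IsWeakSubsolMixed N s a Ω S1 (fun x ↦ f x + g x) (fun x ↦ u x + v x) := by
  refine ⟨hu.1.add hv.1, fun φ hφ hφ01 ↦ ?_⟩
  simp_rw [add_mul]
  rw [gagliardoForm_add_left hu.1 hv.1 hφ, mul_add,
    integral_add (hφ.integrableOn_mul_of_mem_Icc hφ01 hf) (hφ.integrableOn_mul_of_mem_Icc hφ01 hg)]
  exact add_le_add (hu.2 φ hφ hφ01) (hv.2 φ hφ hφ01)

theorem IsWeakSubsolMixed.ae_nonpos (ha : 0 < a) (hΩ : MeasurableSet Ω) (hdisj : Disjoint Ω S1)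
    (hS1 : volume S1 ≠ 0) (hu : IsWeakSubsolMixed N s a Ω S1 f u)
    (hf : ∀ᵐ x ∂volume.restrict Ω, f x ≤ 0) : ∀ᵐ x ∂volume.restrict Ω, u x ≤ 0 := by
  have hT := hu.1.comp_lipschitzWith lipschitzWith_unitTrunc (unitTrunc_of_nonpos le_rfl)
  have hrhs : ∫ x in Ω, f x * unitTrunc (u x) ≤ 0 := by
    refine integral_nonpos_of_ae ?_
    filter_upwards [hf] with x hfx
    exact mul_nonpos_of_nonpos_of_nonneg hfx (unitTrunc_nonneg _)
  have hform : gagliardoForm N s Ω u (fun x ↦ unitTrunc (u x)) ≤ 0 :=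
    nonpos_of_mul_nonpos_right ((hu.2 _ hT fun _ ↦ unitTrunc_mem_Icc _).trans hrhs) (half_pos ha)
  filter_upwards [hT.ae_eq_zero_of_gagliardoForm_self_nonpos hΩ hdisj hS1
    ((gagliardoForm_unitTrunc_le hu.1).trans hform)] with x hx
  exact le_of_not_gt fun hpos ↦ (unitTrunc_pos hpos).ne' hx

lemma IsWeakSolMixed.eigenvalue_pos {lam : ℝ} (ha : 0 < a) (hΩ : MeasurableSet Ω)
    (hdisj : Disjoint Ω S1) (hS1 : volume S1 ≠ 0)
    (hu : IsWeakSolMixed N s a Ω S1 (fun x ↦ lam * u x) u)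
    (hu0 : ¬ ∀ᵐ x ∂volume.restrict Ω, u x = 0) : 0 < lam := by
  contrapose! hu0
  refine hu.1.ae_eq_zero_of_gagliardoForm_self_nonpos hΩ hdisj hS1 ?_
  refine nonpos_of_mul_nonpos_right ?_ (half_pos ha)
  rw [hu.gagliardoForm_eq hu.1]
  refine integral_nonpos fun x ↦ ?_
  rw [mul_assoc]
  exact mul_nonpos_of_nonpos_of_nonneg hu0 (mul_self_nonneg _)

end Subsolutions

section Boundedness

variable {N : ℕ} {s a r K : ℝ} {Ω S1 : Set (Rn N)} {u φ : Rn N → ℝ}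

lemma MemE.max_sub_zero (hK : 0 ≤ K) (hu : MemE N s Ω S1 u) :
    MemE N s Ω S1 (fun x ↦ max (u x - K) 0) :=
  hu.comp_sub (LipschitzWith.id.max_const 0) (max_eq_right (neg_nonpos.2 hK))

lemma mul_max_sub_zero_nonneg (hK : 0 ≤ K) (b : ℝ) : 0 ≤ b * max (b - K) 0 := by
  rcases le_total b K with hb | hb
  · simp [max_eq_right (sub_nonpos.2 hb)]
  · exact mul_nonneg (hK.trans hb) (le_max_right _ _)

lemma frKer_max_sub_zero_nonneg (K : ℝ) (u : Rn N → ℝ) (p : Rn N × Rn N) :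
    0 ≤ frKer N s u (fun x ↦ max (u x - K) 0) p :=
  frKer_comp_nonneg (T := fun b ↦ max (b - K) 0)
    (fun _ _ hbc ↦ max_le_max_right 0 (sub_le_sub_right hbc _)) u p

lemma mul_max_sub_zero_div_le_frKer (hs : 0 ≤ s) (hK : 0 ≤ K) {x y : Rn N}
    (hxy : y ∈ Metric.ball x r) (hy : u y ≤ K) :
    u x * max (u x - 2 * K) 0 / (2 * r ^ ((N : ℝ) + 2 * s)) ≤
      frKer N s u (fun z ↦ max (u z - 2 * K) 0) (x, y) := by
  rcases le_or_gt (u x) (2 * K) with hx | hx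
  · rw [max_eq_right (sub_nonpos.2 hx), mul_zero, zero_div]
    exact frKer_max_sub_zero_nonneg _ u (x, y)
  have hne : x ≠ y := by rintro rfl; linarith
  have hpos : 0 < ‖x - y‖ := norm_pos_iff.2 (sub_ne_zero.2 hne)
  have hle : ‖x - y‖ ≤ r := by
    rw [← dist_eq_norm, dist_comm]; exact (Metric.mem_ball.1 hxy).le
  rw [frKer, max_eq_right (show u y - 2 * K ≤ 0 by linarith), sub_zero, ← div_div,
    ← div_mul_eq_mul_div]
  gcongr
  · exact mul_nonneg (by linarith) (le_max_right _ _)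
  · linarith

lemma MemE.integrable_frKer_prod (hu : MemE N s Ω S1 u) (hφ : MemE N s Ω S1 φ) :
    Integrable (frKer N s u φ) ((volume.restrict Ω).prod volume) := by
  have hint := (hu.integrableOn_frKer hφ).mono_set (prod_subset_Qset univ)
  rwa [IntegrableOn, Measure.volume_eq_prod, ← Measure.prod_restrict, Measure.restrict_univ]
    at hint

lemma integral_integral_frKer_le_gagliardoForm (hu : MemE N s Ω S1 u) (hφ : MemE N s Ω S1 φ)
    (hnonneg : ∀ p, 0 ≤ frKer N s u φ p) :
    ∫ x in Ω, ∫ y, frKer N s u φ (x, y) ≤ gagliardoForm N s Ω u φ :=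
  calc ∫ x in Ω, ∫ y, frKer N s u φ (x, y) = ∫ p in Ω ×ˢ univ, frKer N s u φ p := by
        rw [Measure.volume_eq_prod, ← Measure.prod_restrict, Measure.restrict_univ,
          integral_prod _ (hu.integrable_frKer_prod hφ)]
    _ ≤ gagliardoForm N s Ω u φ :=
        setIntegral_mono_set (hu.integrableOn_frKer hφ) (ae_of_all _ hnonneg)
          (prod_subset_Qset univ).eventuallyLE

lemma mul_integral_le_gagliardoForm_max_sub_zero (hs : 0 ≤ s) (hK : 0 ≤ K) (hr : 0 < r)
    (hΩ : MeasurableSet Ω) (hu : MemE N s Ω S1 u) {V : ℝ}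
    (hV : ∀ x ∈ Ω, V ≤ volume.real (Metric.ball x r ∩ {y | u y ≤ K})) :
    V * ((∫ x in Ω, u x * max (u x - 2 * K) 0) / (2 * r ^ ((N : ℝ) + 2 * s))) ≤
      gagliardoForm N s Ω u (fun x ↦ max (u x - 2 * K) 0) := by
  have h2K : 0 ≤ 2 * K := by positivity
  have hφ := hu.max_sub_zero h2K
  have hnonneg := frKer_max_sub_zero_nonneg (s := s) (2 * K) u
  have hint := hu.integrable_frKer_prod hφ
  have hsection : ∀ᵐ x ∂volume.restrict Ω,
      V * (u x * max (u x - 2 * K) 0 / (2 * r ^ ((N : ℝ) + 2 * s))) ≤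
        ∫ y, frKer N s u (fun z ↦ max (u z - 2 * K) 0) (x, y) := by
    filter_upwards [hint.prod_right_ae, ae_restrict_mem hΩ] with x hx hxΩ
    set A := Metric.ball x r ∩ {y | u y ≤ K}
    have hA : MeasurableSet A :=
      measurableSet_ball.inter (measurableSet_le hu.1 measurable_const)
    have hAtop : volume A ≠ ⊤ :=
      measure_ne_top_of_subset inter_subset_left measure_ball_lt_top.ne
    set c := u x * max (u x - 2 * K) 0 / (2 * r ^ ((N : ℝ) + 2 * s))
    have hc : 0 ≤ c := div_nonneg (mul_max_sub_zero_nonneg h2K _) (by positivity)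
    calc V * c ≤ c * volume.real A := by
          rw [mul_comm c]; exact mul_le_mul_of_nonneg_right (hV x hxΩ) hc
      _ ≤ ∫ y in A, frKer N s u (fun z ↦ max (u z - 2 * K) 0) (x, y) :=
          setIntegral_ge_of_const_le_real hA hAtop
            (fun y hy ↦ mul_max_sub_zero_div_le_frKer hs hK hy.1 hy.2) hx.integrableOn
      _ ≤ ∫ y, frKer N s u (fun z ↦ max (u z - 2 * K) 0) (x, y) :=
          setIntegral_le_integral hx (ae_of_all _ fun y ↦ hnonneg (x, y))
  calc V * ((∫ x in Ω, u x * max (u x - 2 * K) 0) / (2 * r ^ ((N : ℝ) + 2 * s)))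
      = ∫ x in Ω, V * (u x * max (u x - 2 * K) 0 / (2 * r ^ ((N : ℝ) + 2 * s))) := by
        rw [integral_const_mul, integral_div]
    _ ≤ ∫ x in Ω, ∫ y, frKer N s u (fun z ↦ max (u z - 2 * K) 0) (x, y) :=
        integral_mono_ae (((hu.integrableOn_mul hφ).div_const _).const_mul V)
          hint.integral_prod_left hsection
    _ ≤ gagliardoForm N s Ω u (fun x ↦ max (u x - 2 * K) 0) :=
        integral_integral_frKer_le_gagliardoForm hu hφ hnonneg

-- Testing with `(u - 2 K)⁺` at a scale `r` so small that the nonlocal form, through the pairs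
-- `(x, y)` with `|x - y| < r` and `u y ≤ K`, outweighs the term `lam * u`.
theorem IsWeakSolMixed.exists_pos_ae_le {lam : ℝ} (hs : 0 < s) (ha : 0 < a)
    (hΩ : MeasurableSet Ω) (hΩb : Bornology.IsBounded Ω)
    (hu : IsWeakSolMixed N s a Ω S1 (fun x ↦ lam * u x) u) :
    ∃ M : ℝ, 0 < M ∧ ∀ᵐ x ∂volume.restrict Ω, u x ≤ M := by
  obtain ⟨r, hr, hball⟩ := exists_pos_mul_rpow_lt_measure_ball (volume : Measure (Rn N))
    (show 0 < 2 * s by positivity) (8 * lam / a)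
  rw [finrank_euclideanSpace_fin] at hball
  obtain ⟨K, hK, hhalf⟩ := exists_pos_forall_half_ball_le volume hΩb hu.1.1 hr
  have h2K : 0 < 2 * K := by positivity
  have hφ := hu.1.max_sub_zero h2K.le
  set I := ∫ x in Ω, u x * max (u x - 2 * K) 0 with hI
  have hform := mul_integral_le_gagliardoForm_max_sub_zero hs.le hK.le hr hΩ hu.1 hhalf
  have heq : a / 2 * gagliardoForm N s Ω u (fun x ↦ max (u x - 2 * K) 0) = lam * I := by
    rw [hu.gagliardoForm_eq hφ, hI, ← integral_const_mul]
    simp_rw [mul_assoc]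
  have hI0 : I ≤ 0 := by
    by_contra! hIpos
    have hlt : lam * I < a / 2 * (volume.real (Metric.ball (0 : Rn N) r) / 2 *
        (I / (2 * r ^ ((N : ℝ) + 2 * s)))) := by
      calc lam * I = a / 2 * (8 * lam / a * r ^ ((N : ℝ) + 2 * s) / 2 *
            (I / (2 * r ^ ((N : ℝ) + 2 * s)))) := by field_simp; norm_num
        _ < _ := by gcongr
    exact (hlt.trans_le (mul_le_mul_of_nonneg_left hform (half_pos ha).le)).ne' heq
  have hnonneg : 0 ≤ fun x ↦ u x * max (u x - 2 * K) 0 := fun x ↦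
    mul_max_sub_zero_nonneg h2K.le _
  have hzero := (integral_eq_zero_iff_of_nonneg hnonneg (hu.1.integrableOn_mul hφ)).1
    (hI0.antisymm (integral_nonneg hnonneg))
  refine ⟨2 * K, h2K, ?_⟩
  filter_upwards [hzero] with x hx
  exact le_of_not_gt fun hlt ↦
    (mul_pos (h2K.trans hlt) (lt_max_of_lt_left (sub_pos.2 hlt))).ne' hx

end Boundedness

section Comparison

variable {N : ℕ} {s a : ℝ} {Ω S1 : Set (Rn N)} {f u ξ φ : Rn N → ℝ}

lemma bregman_comp_sub (G h : ℝ → ℝ) (t a b : ℝ) :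
    bregman (fun r ↦ G (r - t)) (fun r ↦ h (r - t)) a b = bregman G h (a - t) (b - t) := by
  simp only [bregman, sub_sub_sub_cancel_right]

lemma frKer_comp_eq (G h : ℝ → ℝ) (u φ : Rn N → ℝ) (p : Rn N × Rn N) :
    frKer N s (fun x ↦ G (u x)) φ p = frKer N s u (fun x ↦ h (u x) * φ x) p -
      (φ p.1 * bregman G h (u p.2) (u p.1) + φ p.2 * bregman G h (u p.1) (u p.2)) /
        ‖p.1 - p.2‖ ^ ((N : ℝ) + 2 * s) := by
  simp only [frKer, bregman]
  ring

lemma frKer_huber_add_le (u : Rn N → ℝ) (t : ℝ) (hφ : 0 ≤ φ) (p : Rn N × Rn N) :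
    frKer N s (fun x ↦ huber (u x - t)) φ p +
        {x | u x ≤ t}.indicator 1 p.1 * φ p.1 * huber (u p.2 - t) /
          ‖p.1 - p.2‖ ^ ((N : ℝ) + 2 * s) ≤
      frKer N s u (fun x ↦ unitTrunc (u x - t) * φ x) p := by
  have hkey : {x | u x ≤ t}.indicator 1 p.1 * φ p.1 * huber (u p.2 - t) ≤
      φ p.1 * bregman huber unitTrunc (u p.2 - t) (u p.1 - t) +
        φ p.2 * bregman huber unitTrunc (u p.1 - t) (u p.2 - t) := by
    have h1 := mul_nonneg (hφ p.1) (bregman_huber_nonneg (u p.2 - t) (u p.1 - t))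
    have h2 := mul_nonneg (hφ p.2) (bregman_huber_nonneg (u p.1 - t) (u p.2 - t))
    by_cases ht : u p.1 ≤ t
    · rw [indicator_of_mem (show p.1 ∈ {x | u x ≤ t} from ht), Pi.one_apply,
        one_mul, bregman_huber_of_nonpos (sub_nonpos.2 ht)]
      exact le_add_of_nonneg_right h2
    · rw [indicator_of_notMem (show p.1 ∉ {x | u x ≤ t} from ht), zero_mul, zero_mul]
      exact add_nonneg h1 h2
  rw [frKer_comp_eq (fun r ↦ huber (r - t)) (fun r ↦ unitTrunc (r - t)), bregman_comp_sub,
    bregman_comp_sub, sub_add, sub_le_self_iff, sub_nonneg]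
  exact div_le_div_of_nonneg_right hkey (Real.rpow_nonneg (norm_nonneg _) _)

lemma MemE.huber_sub {t : ℝ} (ht : 0 ≤ t) (hu : MemE N s Ω S1 u) :
    MemE N s Ω S1 (fun x ↦ huber (u x - t)) :=
  hu.comp_sub lipschitzWith_huber (huber_of_nonpos (neg_nonpos.2 ht))

lemma MemE.unitTrunc_sub_mul {t : ℝ} (ht : 0 ≤ t) (hu : MemE N s Ω S1 u)
    (hφ : MemE N s Ω S1 φ) (hφ01 : ∀ x, φ x ∈ Icc (0 : ℝ) 1) :
    MemE N s Ω S1 (fun x ↦ unitTrunc (u x - t) * φ x) := by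
  have hT := hu.comp_sub lipschitzWith_unitTrunc (unitTrunc_of_nonpos (neg_nonpos.2 ht))
  refine hT.mul_of_abs_le_one hφ (fun x ↦ ?_) fun x ↦ ?_
  · rw [abs_of_nonneg (unitTrunc_nonneg _)]; exact unitTrunc_le_one _
  · rw [abs_of_nonneg (hφ01 x).1]; exact (hφ01 x).2

lemma indicator_mul_huber_div_le_frKer_sub (hs : 0 ≤ s) {D : ℝ} {p : Rn N × Rn N}
    (hD : ‖p.1 - p.2‖ ≤ D) (u : Rn N → ℝ) (t : ℝ) (hφ : 0 ≤ φ) :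
    {x | u x ≤ t}.indicator 1 p.1 * φ p.1 * huber (u p.2 - t) / D ^ ((N : ℝ) + 2 * s) ≤
      frKer N s u (fun x ↦ unitTrunc (u x - t) * φ x) p -
        frKer N s (fun x ↦ huber (u x - t)) φ p := by
  refine le_trans ?_ (le_sub_iff_add_le'.2 (frKer_huber_add_le u t hφ p))
  by_cases hu : u p.1 ≤ t ∧ t < u p.2
  · have hne : p.1 ≠ p.2 := fun h ↦ (h ▸ hu.1).not_gt hu.2
    have hpos : 0 < ‖p.1 - p.2‖ := norm_pos_iff.2 (sub_ne_zero.2 hne)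
    have hind : (0 : ℝ) ≤ {x | u x ≤ t}.indicator 1 p.1 :=
      indicator_nonneg (fun _ _ ↦ zero_le_one) _
    have hnum := mul_nonneg (mul_nonneg hind (hφ p.1)) (huber_nonneg (u p.2 - t))
    gcongr
  · have hzero : {x | u x ≤ t}.indicator 1 p.1 * φ p.1 * huber (u p.2 - t) = 0 := by
      by_cases h : u p.1 ≤ t
      · rw [huber_of_nonpos (sub_nonpos.2 (not_lt.1 fun h' ↦ hu ⟨h, h'⟩)), mul_zero]
      · rw [indicator_of_notMem (show p.1 ∉ {x | u x ≤ t} from h), zero_mul, zero_mul]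
    rw [hzero, zero_div, zero_div]

lemma integrableOn_indicator_le_one (hΩtop : volume Ω ≠ ⊤) (hu : Measurable u) (t : ℝ) :
    IntegrableOn ({x | u x ≤ t}.indicator (1 : Rn N → ℝ)) Ω :=
  (integrableOn_const hΩtop).indicator (measurableSet_le hu measurable_const)

lemma integral_mul_integral_huber_div_le_gagliardoForm_sub (hs : 0 ≤ s) (hΩ : MeasurableSet Ω)
    (hΩtop : volume Ω ≠ ⊤) {D : ℝ} (hD : ∀ x ∈ Ω, ∀ y ∈ Ω, ‖x - y‖ ≤ D) {t : ℝ} (ht : 0 ≤ t)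
    (hu : MemE N s Ω S1 u) (hφ : MemE N s Ω S1 φ) (hφ01 : ∀ x, φ x ∈ Icc (0 : ℝ) 1) :
    (∫ x in Ω, {x | u x ≤ t}.indicator 1 x * φ x) * (∫ x in Ω, huber (u x - t)) /
        D ^ ((N : ℝ) + 2 * s) ≤
      gagliardoForm N s Ω u (fun x ↦ unitTrunc (u x - t) * φ x) -
        gagliardoForm N s Ω (fun x ↦ huber (u x - t)) φ := by
  have hH := hu.huber_sub ht
  have hψ := hu.unitTrunc_sub_mul ht hφ hφ01
  have hφ0 : 0 ≤ φ := fun x ↦ (hφ01 x).1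
  have hind := hφ.integrableOn_mul_of_mem_Icc hφ01 (integrableOn_indicator_le_one hΩtop hu.1 t)
  have hprod : IntegrableOn (fun p : Rn N × Rn N ↦
      {x | u x ≤ t}.indicator 1 p.1 * φ p.1 * huber (u p.2 - t)) (Ω ×ˢ Ω) := by
    rw [IntegrableOn, Measure.volume_eq_prod, ← Measure.prod_restrict]
    exact hind.mul_prod (hH.integrableOn hΩtop)
  have hdiff : IntegrableOn (fun p ↦ frKer N s u (fun x ↦ unitTrunc (u x - t) * φ x) p -
      frKer N s (fun x ↦ huber (u x - t)) φ p) (Qset N Ω) :=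
    (hu.integrableOn_frKer hψ).sub (hH.integrableOn_frKer hφ)
  have hdiff0 (p) : 0 ≤ frKer N s u (fun x ↦ unitTrunc (u x - t) * φ x) p -
      frKer N s (fun x ↦ huber (u x - t)) φ p := by
    refine le_trans ?_ (indicator_mul_huber_div_le_frKer_sub hs le_rfl u t hφ0)
    exact div_nonneg (mul_nonneg (mul_nonneg (indicator_nonneg (fun _ _ ↦ zero_le_one) _)
      (hφ0 _)) (huber_nonneg _)) (Real.rpow_nonneg (norm_nonneg _) _)
  calc (∫ x in Ω, {x | u x ≤ t}.indicator 1 x * φ x) * (∫ x in Ω, huber (u x - t)) /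
        D ^ ((N : ℝ) + 2 * s)
      = ∫ p in Ω ×ˢ Ω, {x | u x ≤ t}.indicator 1 p.1 * φ p.1 * huber (u p.2 - t) /
          D ^ ((N : ℝ) + 2 * s) := by
        rw [integral_div, Measure.volume_eq_prod, ← setIntegral_prod_mul]
    _ ≤ ∫ p in Ω ×ˢ Ω, (frKer N s u (fun x ↦ unitTrunc (u x - t) * φ x) p -
          frKer N s (fun x ↦ huber (u x - t)) φ p) :=
        setIntegral_mono_on (hprod.div_const _) (hdiff.mono_set (prod_subset_Qset Ω))
          (hΩ.prod hΩ) fun p hp ↦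
            indicator_mul_huber_div_le_frKer_sub hs (hD p.1 hp.1 p.2 hp.2) u t hφ0
    _ ≤ ∫ p in Qset N Ω, (frKer N s u (fun x ↦ unitTrunc (u x - t) * φ x) p -
          frKer N s (fun x ↦ huber (u x - t)) φ p) :=
        setIntegral_mono_set hdiff (ae_of_all _ hdiff0) (prod_subset_Qset Ω).eventuallyLE
    _ = _ := integral_sub (hu.integrableOn_frKer hψ) (hH.integrableOn_frKer hφ)

lemma MemE.integral_huber_sub_pos (hΩtop : volume Ω ≠ ⊤) {t : ℝ} (ht : 0 ≤ t)
    (hu : MemE N s Ω S1 u) (hut : ¬ ∀ᵐ x ∂volume.restrict Ω, u x ≤ t) :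
    0 < ∫ x in Ω, huber (u x - t) := by
  have hH0 : 0 ≤ fun x ↦ huber (u x - t) := fun x ↦ huber_nonneg _
  refine (integral_nonneg hH0).lt_of_ne' fun hzero ↦ hut ?_
  filter_upwards [(integral_eq_zero_iff_of_nonneg hH0
    ((hu.huber_sub ht).integrableOn hΩtop)).1 hzero] with x hx
  exact le_of_not_gt fun h ↦ (huber_pos (sub_pos.2 h)).ne' hx

-- The convexity gap of `huber` between the non-null sets `{u ≤ t}` and `{t < u}` produces
-- the term `-c` on `{u ≤ t}`.
lemma IsWeakSolMixed.exists_isWeakSubsolMixed_huber (hs : 0 ≤ s) (ha : 0 < a)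
    (hΩ : MeasurableSet Ω) (hΩb : Bornology.IsBounded Ω) (hf : IntegrableOn f Ω)
    (hu : IsWeakSolMixed N s a Ω S1 f u) {t : ℝ} (ht : 0 ≤ t)
    (hut : ¬ ∀ᵐ x ∂volume.restrict Ω, u x ≤ t) :
    ∃ c : ℝ, 0 < c ∧ IsWeakSubsolMixed N s a Ω S1
      (fun x ↦ unitTrunc (u x - t) * f x - c * {x | u x ≤ t}.indicator 1 x)
      (fun x ↦ huber (u x - t)) := by
  have hΩtop : volume Ω ≠ ⊤ := hΩb.measure_lt_top.ne
  have hD (x) (hx : x ∈ Ω) (y) (hy : y ∈ Ω) : ‖x - y‖ ≤ Metric.diam Ω + 1 := by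
    rw [← dist_eq_norm]
    exact (Metric.dist_le_diam_of_mem hΩb hx hy).trans (le_add_of_nonneg_right zero_le_one)
  have hDpos : 0 < (Metric.diam Ω + 1) ^ ((N : ℝ) + 2 * s) :=
    Real.rpow_pos_of_pos (add_pos_of_nonneg_of_pos Metric.diam_nonneg one_pos) _
  set d := (∫ x in Ω, huber (u x - t)) / (Metric.diam Ω + 1) ^ ((N : ℝ) + 2 * s) with hd
  have hdpos : 0 < d := div_pos (hu.1.integral_huber_sub_pos hΩtop ht hut) hDpos
  refine ⟨a / 2 * d, mul_pos (half_pos ha) hdpos, hu.1.huber_sub ht, fun φ hφ hφ01 ↦ ?_⟩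
  have hψ := hu.1.unitTrunc_sub_mul ht hφ hφ01
  have hind := hφ.integrableOn_mul_of_mem_Icc hφ01
    (integrableOn_indicator_le_one hΩtop hu.1.1 t)
  have hfψ : IntegrableOn (fun x ↦ f x * (unitTrunc (u x - t) * φ x)) Ω :=
    hψ.integrableOn_mul_of_mem_Icc (fun x ↦ ⟨mul_nonneg (unitTrunc_nonneg _) (hφ01 x).1,
      mul_le_one₀ (unitTrunc_le_one _) (hφ01 x).1 (hφ01 x).2⟩) hf
  have hgap :=
    integral_mul_integral_huber_div_le_gagliardoForm_sub hs hΩ hΩtop hD ht hu.1 hφ hφ01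
  rw [mul_div_assoc, ← hd] at hgap
  calc a / 2 * gagliardoForm N s Ω (fun x ↦ huber (u x - t)) φ
      ≤ a / 2 * (gagliardoForm N s Ω u (fun x ↦ unitTrunc (u x - t) * φ x) -
          (∫ x in Ω, {x | u x ≤ t}.indicator 1 x * φ x) * d) :=
        mul_le_mul_of_nonneg_left (le_sub_comm.1 hgap) (half_pos ha).le
    _ = (∫ x in Ω, f x * (unitTrunc (u x - t) * φ x)) -
          a / 2 * d * ∫ x in Ω, {x | u x ≤ t}.indicator 1 x * φ x := by
        rw [← hu.gagliardoForm_eq hψ]; ring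
    _ = ∫ x in Ω, (unitTrunc (u x - t) * f x - a / 2 * d * {x | u x ≤ t}.indicator 1 x) * φ x := by
        rw [← integral_const_mul, ← integral_sub hfψ (hind.const_mul _)]
        congr with x
        ring

theorem IsWeakSolMixed.ae_le_mul_torsion (ha : 0 < a) (hΩ : MeasurableSet Ω) (hΩtop : volume Ω ≠ ⊤)
    (hdisj : Disjoint Ω S1) (hS1 : volume S1 ≠ 0) (hf : IntegrableOn f Ω) {M : ℝ}
    (hfM : ∀ᵐ x ∂volume.restrict Ω, f x ≤ M) (hu : IsWeakSolMixed N s a Ω S1 f u)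
    (hξ : IsWeakSolMixed N s a Ω S1 (fun _ ↦ 1) ξ) :
    ∀ᵐ x ∂volume.restrict Ω, u x ≤ M * ξ x := by
  have hsub := (hu.isWeakSubsolMixed_const_mul 1).add (hf.const_mul 1)
    (integrableOn_const hΩtop) (hξ.isWeakSubsolMixed_const_mul (-M))
  have hrhs : ∀ᵐ x ∂volume.restrict Ω, 1 * f x + -M * 1 ≤ 0 := by
    filter_upwards [hfM] with x hx
    linarith
  filter_upwards [hsub.ae_nonpos ha hΩ hdisj hS1 hrhs] with x hx
  linarith

theorem IsWeakSolMixed.exists_pos_torsion_ae_le_mul (hs : 0 ≤ s) (ha : 0 < a) (hΩ : MeasurableSet Ω)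
    (hΩb : Bornology.IsBounded Ω) (hdisj : Disjoint Ω S1) (hS1 : volume S1 ≠ 0)
    (hf : IntegrableOn f Ω) (hf0 : ∀ᵐ x ∂volume.restrict Ω, 0 ≤ f x)
    (hu : IsWeakSolMixed N s a Ω S1 f u) (hξ : IsWeakSolMixed N s a Ω S1 (fun _ ↦ 1) ξ)
    {t κ : ℝ} (ht : 0 ≤ t) (hut : ¬ ∀ᵐ x ∂volume.restrict Ω, u x ≤ t) (hκ : 0 < κ)
    (hfκ : ∀ᵐ x ∂volume.restrict Ω, t < u x → κ ≤ f x) :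
    ∃ C : ℝ, 0 < C ∧ ∀ᵐ x ∂volume.restrict Ω, ξ x ≤ C * u x := by
  have hΩtop : volume Ω ≠ ⊤ := hΩb.measure_lt_top.ne
  obtain ⟨c, hc, hH⟩ := hu.exists_isWeakSubsolMixed_huber hs ha hΩ hΩb hf ht hut
  have hHf : IntegrableOn
      (fun x ↦ unitTrunc (u x - t) * f x - c * {x | u x ≤ t}.indicator 1 x) Ω := by
    refine Integrable.sub (hf.bdd_mul (c := 1) ?_ (ae_of_all _ fun x ↦ ?_))
      ((integrableOn_indicator_le_one hΩtop hu.1.1 t).const_mul c)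
    · exact (lipschitzWith_unitTrunc.continuous.measurable.comp
        (hu.1.1.sub_const t)).aestronglyMeasurable
    · rw [Real.norm_of_nonneg (unitTrunc_nonneg _)]
      exact unitTrunc_le_one _
  set M := 1 + c / κ with hM
  have hMpos : 0 < M := by positivity
  have hsub := (hH.add hHf (hf.const_mul (-M)) (hu.isWeakSubsolMixed_const_mul (-M))).add
    (hHf.add (hf.const_mul (-M))) (integrableOn_const hΩtop) (hξ.isWeakSubsolMixed_const_mul c)
  have hrhs : ∀ᵐ x ∂volume.restrict Ω, unitTrunc (u x - t) * f x -
      c * {x | u x ≤ t}.indicator 1 x + -M * f x + c * 1 ≤ 0 := by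
    filter_upwards [hf0, hfκ] with x hfx hfκx
    by_cases hux : u x ≤ t
    · rw [unitTrunc_of_nonpos (sub_nonpos.2 hux),
        indicator_of_mem (show x ∈ {x | u x ≤ t} from hux), Pi.one_apply]
      linarith [mul_nonneg hMpos.le hfx]
    · rw [indicator_of_notMem (show x ∉ {x | u x ≤ t} from hux)]
      have hcf : c ≤ c / κ * f x :=
        calc c = c / κ * κ := (div_mul_cancel₀ c hκ.ne').symm
          _ ≤ c / κ * f x := by gcongr; exact hfκx (not_le.1 hux)
      rw [hM]
      linarith [mul_le_of_le_one_left hfx (unitTrunc_le_one (u x - t))]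
  refine ⟨M / c, div_pos hMpos hc, ?_⟩
  filter_upwards [hsub.ae_nonpos ha hΩ hdisj hS1 hrhs] with x hx
  rw [div_mul_eq_mul_div, le_div_iff₀' hc]
  linarith [huber_nonneg (u x - t)]

end Comparison

theorem eigenfunction_torsion_comparison_general {N : ℕ} {s a lam : ℝ} (hs : 0 < s) (ha : 0 < a)
    {Ω S1 : Set (Rn N)} (hΩ : MeasurableSet Ω) (hΩb : Bornology.IsBounded Ω)
    (hΩ0 : volume Ω ≠ 0) (hdisj : Disjoint Ω S1) (hS1 : volume S1 ≠ 0) {u ξ : Rn N → ℝ}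
    (hpos : ∀ᵐ x ∂volume.restrict Ω, 0 < u x)
    (hu : IsWeakSolMixed N s a Ω S1 (fun x ↦ lam * u x) u)
    (hξ : IsWeakSolMixed N s a Ω S1 (fun _ ↦ 1) ξ) :
    ∃ C : ℝ, 0 < C ∧ ∀ᵐ x ∂volume.restrict Ω, C⁻¹ * ξ x ≤ u x ∧ u x ≤ C * ξ x := by
  have : (ae (volume.restrict Ω)).NeBot := ae_restrict_neBot.2 hΩ0
  have hu0 : ¬ ∀ᵐ x ∂volume.restrict Ω, u x ≤ 0 := fun h ↦
    let ⟨_, hx, hx'⟩ := (hpos.and h).exists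
    hx.not_ge hx'
  have hlam := hu.eigenvalue_pos ha hΩ hdisj hS1 (mt (·.mono fun _ ↦ le_of_eq) hu0)
  have hΩtop : volume Ω ≠ ⊤ := hΩb.measure_lt_top.ne
  have hf : IntegrableOn (fun x ↦ lam * u x) Ω := (hu.1.integrableOn hΩtop).const_mul lam
  obtain ⟨M, hM, huM⟩ := hu.exists_pos_ae_le hs ha hΩ hΩb
  have hupper := hu.ae_le_mul_torsion ha hΩ hΩtop hdisj hS1 hf
    (huM.mono fun x hx ↦ mul_le_mul_of_nonneg_left hx hlam.le) hξ
  obtain ⟨t, ht, hut⟩ := exists_pos_not_ae_le hu0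
  obtain ⟨C, hC, hlower⟩ := hu.exists_pos_torsion_ae_le_mul hs.le ha hΩ hΩb hdisj hS1 hf
    (hpos.mono fun x hx ↦ (mul_pos hlam hx).le) hξ ht.le hut (mul_pos hlam ht)
    (ae_of_all _ fun x hx ↦ mul_le_mul_of_nonneg_left hx.le hlam.le)
  have hCM : 0 < C + lam * M := by positivity
  refine ⟨C + lam * M, hCM, ?_⟩
  filter_upwards [hpos, hupper, hlower] with x hx hux hξx
  have hξ0 : 0 < ξ x := pos_of_mul_pos_right (hx.trans_le hux) (mul_pos hlam hM).le
  exact ⟨(inv_mul_le_iff₀ hCM).2 (by nlinarith [mul_pos (mul_pos hlam hM) hx]),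
    by nlinarith [mul_pos hC hξ0]⟩

/-- Comparison between the first eigenfunction χ₁ of the fractional Laplacian with
zero mixed boundary conditions and the solution ξ0 of the mixed problem with
right-hand side 1: C⁻¹ ξ0 ≤ χ₁ ≤ C ξ0 in Ω. -/
theorem eigenfunction_torsion_comparison
    {N : ℕ} (hN : 1 ≤ N) {s aNs : ℝ} (hs0 : 0 < s) (hs1 : s < 1) (haNs : 0 < aNs)
    {Ω S1 S2 : Set (Rn N)} (hΩo : IsOpen Ω) (hΩb : Bornology.IsBounded Ω)
    (hΩc : IsConnected Ω)
    (hS1o : IsOpen S1) (hS2o : IsOpen S2)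
    (hS1m : 0 < volume S1) (hS2m : 0 < volume S2)
    (hdisj : Disjoint S1 S2) (hcov : closure S1 ∪ closure S2 = Ωᶜ)
    (lam1 : ℝ)
    (hlam1 : lam1 = sInf { r : ℝ | ∃ w : Rn N → ℝ, MemE N s Ω S1 w ∧
      0 < ∫ x in Ω, (w x) ^ 2 ∧
      r = ((aNs / 2) * ∫ p in Qset N Ω, frKer N s w w p) / ∫ x in Ω, (w x) ^ 2 })
    (χ1 : Rn N → ℝ) (hχ1E : MemE N s Ω S1 χ1)
    (hχ1_pos : ∀ᵐ x ∂(volume.restrict Ω), 0 < χ1 x)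
    (hχ1_norm : (∫ x in Ω, (χ1 x) ^ 2) = 1)
    (hχ1_eigen : ∀ φ : Rn N → ℝ, MemE N s Ω S1 φ →
      (aNs / 2) * ∫ p in Qset N Ω, frKer N s χ1 φ p = lam1 * ∫ x in Ω, χ1 x * φ x)
    (ξ0 : Rn N → ℝ) (hξ0 : IsWeakSolMixed N s aNs Ω S1 (fun _ => 1) ξ0) :
    ∃ C : ℝ, 0 < C ∧
      ∀ᵐ x : Rn N, x ∈ Ω → C⁻¹ * ξ0 x ≤ χ1 x ∧ χ1 x ≤ C * ξ0 x := by
  have hΩS1 : Disjoint Ω S1 := disjoint_compl_right.mono_right <|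
    subset_closure.trans (subset_union_left.trans hcov.subset)
  have hχ1 : IsWeakSolMixed N s aNs Ω S1 (fun x ↦ lam1 * χ1 x) χ1 :=
    ⟨hχ1E, fun φ hφ ↦ by simp_rw [hχ1_eigen φ hφ, mul_assoc, integral_const_mul]⟩
  have hΩ0 : volume Ω ≠ 0 := (hΩo.measure_pos volume hΩc.nonempty).ne'
  simpa only [ae_restrict_iff' hΩo.measurableSet] using eigenfunction_torsion_comparison_general
    hs0 haNs hΩo.measurableSet hΩb hΩ0 hΩS1 hS1m.ne' hχ1_pos hχ1 hξ0
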